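/- The striction line of the C-ruled surface coincides with the base curve, i.e. α*(s) = α(s) for all s ∈ ℝ, if and only if g(s)·τ(s) = 0 for all s; in particular, if α is a general helix (g ≡ 0) or a planar curve (τ ≡ 0), then α* = α. -/

import Mathlib

open RealInnerProductSpace

/-- Cross product on `EuclideanSpace ℝ (Fin 3)`. -/
noncomputable def cross3 (u v : EuclideanSpace ℝ (Fin 3)) : EuclideanSpace ℝ (Fin 3) :=
  (EuclideanSpace.equiv (Fin 3) ℝ).symm
    (crossProduct ((EuclideanSpace.equiv (Fin 3) ℝ) u) ((EuclideanSpace.equiv (Fin 3) ℝ) v))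

/-- Determinant of the 3×3 matrix whose rows are the given vectors. -/
noncomputable def det3 (u v w : EuclideanSpace ℝ (Fin 3)) : ℝ :=
  Matrix.det (Matrix.of ![(EuclideanSpace.equiv (Fin 3) ℝ) u,
    (EuclideanSpace.equiv (Fin 3) ℝ) v, (EuclideanSpace.equiv (Fin 3) ℝ) w])

/-!
Differentiate `⟪T, C⟫ = -κ / f` along the curve. Since `T' = κ N` is orthogonal to `C`, this gives
`⟪T, C'⟫ = -(κ / f)' = g τ / f`, which vanishes exactly when `g τ` does. Because `⟪T, C⟫ ≠ 0` forces
`C ≠ 0`, the displacement `(⟪T, C'⟫ / ‖C'‖²) • C` of the striction line vanishes under the same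
condition.
-/

open Topology

theorem inner_left_cross3 (u v : EuclideanSpace ℝ (Fin 3)) : ⟪u, cross3 u v⟫ = 0 := by
  rw [real_inner_comm, EuclideanSpace.inner_eq_star_dotProduct]
  exact dot_self_cross _ _

theorem inner_right_cross3 (u v : EuclideanSpace ℝ (Fin 3)) : ⟪v, cross3 u v⟫ = 0 := by
  rw [real_inner_comm, EuclideanSpace.inner_eq_star_dotProduct]
  exact dot_cross_self _ _

theorem contDiffAt_cross3 {F : Type*} [NormedAddCommGroup F] [NormedSpace ℝ F] {n : WithTop ℕ∞}
    {u v : F → EuclideanSpace ℝ (Fin 3)} {x : F} (hu : ContDiffAt ℝ n u x)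
    (hv : ContDiffAt ℝ n v x) : ContDiffAt ℝ n (fun y => cross3 (u y) (v y)) x := by
  let e := EuclideanSpace.equiv (Fin 3) ℝ
  have hcross : ContDiffAt ℝ n (fun y => crossProduct.toContinuousBilinearMap (e (u y)) (e (v y)))
      x :=
    (contDiffAt_const.clm_apply (e.contDiff.contDiffAt.comp x hu)).clm_apply
      (e.contDiff.contDiffAt.comp x hv)
  exact e.symm.contDiff.contDiffAt.comp x hcross

theorem contDiffAt_deriv_deriv {𝕜 F : Type*} [NontriviallyNormedField 𝕜] [NormedAddCommGroup F]
    [NormedSpace 𝕜 F] {n : WithTop ℕ∞} {u : 𝕜 → F} {x : 𝕜} (hu : ContDiffAt 𝕜 (n + 2) u x) :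
    ContDiffAt 𝕜 n (deriv (deriv u)) x := by
  have hu' : ContDiffAt 𝕜 (n + 1 + 1) u x := by rwa [add_assoc, one_add_one_eq_two]
  exact (hu'.derivWithin le_rfl).derivWithin le_rfl

theorem deriv_div_sqrt_sq_add_sq {x y : ℝ → ℝ} {s : ℝ} (hx : DifferentiableAt ℝ x s)
    (hy : DifferentiableAt ℝ y s) (hxs : x s ≠ 0) :
    deriv (fun t => x t / √(x t ^ 2 + y t ^ 2)) s =
      -(x s ^ 2 / (x s ^ 2 + y s ^ 2) * deriv (fun t => y t / x t) s * y s /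
        √(x s ^ 2 + y s ^ 2)) := by
  have hq : 0 < x s ^ 2 + y s ^ 2 := by positivity
  have hr : √(x s ^ 2 + y s ^ 2) ≠ 0 := (Real.sqrt_pos.2 hq).ne'
  have hsq : √(x s ^ 2 + y s ^ 2) ^ 2 = x s ^ 2 + y s ^ 2 := Real.sq_sqrt hq.le
  have hsqrt := ((hx.hasDerivAt.fun_pow 2).fun_add (hy.hasDerivAt.fun_pow 2)).sqrt hq.ne'
  have hquot : deriv (fun t => x t / √(x t ^ 2 + y t ^ 2)) s =
      -((deriv y s * x s - y s * deriv x s) * y s) / √(x s ^ 2 + y s ^ 2) ^ 3 := by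
    rw [(hx.hasDerivAt.fun_div hsqrt hr).deriv]
    field_simp
    push_cast
    linear_combination 2 * deriv x s * hsq
  have hratio : x s ^ 2 * deriv (fun t => y t / x t) s = deriv y s * x s - y s * deriv x s := by
    rw [(hy.hasDerivAt.fun_div hx.hasDerivAt hxs).deriv]
    field_simp
  rw [hquot, div_mul_eq_mul_div, hratio, pow_succ, hsq]
  field_simp

section InnerProductSpace

variable {E : Type*} [NormedAddCommGroup E] [InnerProductSpace ℝ E] {s : ℝ}

theorem inner_deriv_eq_zero_of_eventually_norm_eq {u : ℝ → E} {r : ℝ}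
    (hu : ∀ᶠ t in 𝓝 s, ‖u t‖ = r) : ⟪u s, deriv u s⟫ = 0 := by
  by_cases hd : DifferentiableAt ℝ u s
  · have hconst : (fun t => ‖u t‖ ^ 2) =ᶠ[𝓝 s] fun _ => r ^ 2 := hu.mono fun t ht => by simp [ht]
    have hderiv : 2 * ⟪u s, deriv u s⟫ = 0 := by
      rw [← hd.hasDerivAt.norm_sq.deriv, hconst.deriv_eq, deriv_const]
    simpa using hderiv
  · rw [deriv_zero_of_not_differentiableAt hd, inner_zero_right]

/-- The striction line of the ruled surface `α s + v • c s`, for rulings `c` of constant length. -/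
noncomputable def strictionLine (α c : ℝ → E) (s : ℝ) : E :=
  α s - (⟪deriv α s, deriv c s⟫ / ‖deriv c s‖ ^ 2) • c s

-- Where `deriv c s = 0`, division by zero makes the displacement vanish, like the inner product.
theorem strictionLine_eq_iff {α c : ℝ → E} (hc : c s ≠ 0) :
    strictionLine α c s = α s ↔ ⟪deriv α s, deriv c s⟫ = 0 := by
  rw [strictionLine, sub_eq_self, smul_eq_zero, or_iff_left hc, div_eq_zero_iff,
    or_iff_left_of_imp]
  intro h
  rw [norm_eq_zero.1 (pow_eq_zero_iff two_ne_zero |>.1 h), inner_zero_right]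

end InnerProductSpace

namespace UnitSpeedCurve

section Curvature

variable {E : Type*} [NormedAddCommGroup E] [InnerProductSpace ℝ E]

/-- The curvature `κ` of a unit-speed curve. -/
noncomputable def curvature (α : ℝ → E) (s : ℝ) : ℝ :=
  ‖deriv (deriv α) s‖

/-- The principal normal `N` of a unit-speed curve, with value `0` where the curvature vanishes. -/
noncomputable def principalNormal (α : ℝ → E) (s : ℝ) : E :=
  (curvature α s)⁻¹ • deriv (deriv α) s

variable {α : ℝ → E} {s : ℝ} {n : WithTop ℕ∞}

theorem contDiffAt_curvature (hα : ContDiffAt ℝ (n + 2) α s) (hκ : curvature α s ≠ 0) :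
    ContDiffAt ℝ n (curvature α) s :=
  (contDiffAt_deriv_deriv hα).norm ℝ (norm_ne_zero_iff.1 hκ)

theorem contDiffAt_principalNormal (hα : ContDiffAt ℝ (n + 2) α s) (hκ : curvature α s ≠ 0) :
    ContDiffAt ℝ n (principalNormal α) s :=
  ((contDiffAt_curvature hα hκ).inv hκ).smul (contDiffAt_deriv_deriv hα)

theorem curvature_smul_principalNormal (α : ℝ → E) (s : ℝ) :
    curvature α s • principalNormal α s = deriv (deriv α) s := by
  by_cases hκ : curvature α s = 0
  · rw [hκ, zero_smul, norm_eq_zero.1 hκ]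
  · rw [principalNormal, smul_inv_smul₀ hκ]

end Curvature

/-- The binormal `B` of a unit-speed curve. -/
noncomputable def binormal (α : ℝ → EuclideanSpace ℝ (Fin 3)) (s : ℝ) :
    EuclideanSpace ℝ (Fin 3) :=
  cross3 (deriv α s) (principalNormal α s)

/-- The torsion `τ` of a unit-speed curve. -/
noncomputable def torsion (α : ℝ → EuclideanSpace ℝ (Fin 3)) (s : ℝ) : ℝ :=
  ⟪deriv (principalNormal α) s, binormal α s⟫

/-- The alternative curvature `f` of a unit-speed curve. -/
noncomputable def altCurvatureF (α : ℝ → EuclideanSpace ℝ (Fin 3)) (s : ℝ) : ℝ :=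
  √(curvature α s ^ 2 + torsion α s ^ 2)

/-- The alternative curvature `g` of a unit-speed curve. -/
noncomputable def altCurvatureG (α : ℝ → EuclideanSpace ℝ (Fin 3)) (s : ℝ) : ℝ :=
  curvature α s ^ 2 / (curvature α s ^ 2 + torsion α s ^ 2) *
    deriv (fun t => torsion α t / curvature α t) s

/-- The vector `C` of the alternative moving frame `(N, C, W)` of a unit-speed curve. -/
noncomputable def altFrameC (α : ℝ → EuclideanSpace ℝ (Fin 3)) (s : ℝ) :
    EuclideanSpace ℝ (Fin 3) :=
  (altCurvatureF α s)⁻¹ • ((-curvature α s) • deriv α s + torsion α s • binormal α s)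

variable {α : ℝ → EuclideanSpace ℝ (Fin 3)} {s : ℝ} {n : WithTop ℕ∞}

theorem altCurvatureF_ne_zero (hκ : curvature α s ≠ 0) : altCurvatureF α s ≠ 0 :=
  (Real.sqrt_pos.2 (by positivity)).ne'

theorem contDiffAt_binormal (hα : ContDiffAt ℝ (n + 2) α s) (hκ : curvature α s ≠ 0) :
    ContDiffAt ℝ n (binormal α) s :=
  contDiffAt_cross3 (hα.derivWithin (by gcongr; exact one_le_two))
    (contDiffAt_principalNormal hα hκ)

theorem contDiffAt_torsion (hα : ContDiffAt ℝ (n + 3) α s) (hκ : curvature α s ≠ 0) :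
    ContDiffAt ℝ n (torsion α) s := by
  have hα' : ContDiffAt ℝ (n + 1 + 2) α s := by
    convert hα using 1
    rw [add_assoc]
    norm_num
  exact ((contDiffAt_principalNormal hα' hκ).derivWithin le_rfl).inner ℝ
    (contDiffAt_binormal (hα.of_le (by gcongr; norm_num)) hκ)

theorem contDiffAt_altCurvatureF (hα : ContDiffAt ℝ (n + 3) α s) (hκ : curvature α s ≠ 0) :
    ContDiffAt ℝ n (altCurvatureF α) s :=
  (((contDiffAt_curvature (hα.of_le (by gcongr; norm_num)) hκ).pow 2).add
    ((contDiffAt_torsion hα hκ).pow 2)).sqrt (by positivity)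

theorem contDiffAt_altFrameC (hα : ContDiffAt ℝ (n + 3) α s) (hκ : curvature α s ≠ 0) :
    ContDiffAt ℝ n (altFrameC α) s := by
  have hα₂ : ContDiffAt ℝ (n + 2) α s := hα.of_le (by gcongr; norm_num)
  have hT : ContDiffAt ℝ n (deriv α) s := hα₂.derivWithin (by gcongr; exact one_le_two)
  exact ((contDiffAt_altCurvatureF hα hκ).inv (altCurvatureF_ne_zero hκ)).smul
    (((contDiffAt_curvature hα₂ hκ).neg.smul hT).add
      ((contDiffAt_torsion hα hκ).smul (contDiffAt_binormal hα₂ hκ)))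

theorem inner_tangent_binormal (α : ℝ → EuclideanSpace ℝ (Fin 3)) (s : ℝ) :
    ⟪deriv α s, binormal α s⟫ = 0 :=
  inner_left_cross3 _ _

theorem inner_deriv_tangent_binormal (α : ℝ → EuclideanSpace ℝ (Fin 3)) (s : ℝ) :
    ⟪deriv (deriv α) s, binormal α s⟫ = 0 := by
  rw [← curvature_smul_principalNormal, real_inner_smul_left, binormal, inner_right_cross3,
    mul_zero]

theorem inner_altFrameC (α : ℝ → EuclideanSpace ℝ (Fin 3)) (s : ℝ) (v : EuclideanSpace ℝ (Fin 3)) :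
    ⟪v, altFrameC α s⟫ =
      (altCurvatureF α s)⁻¹ *
        (-curvature α s * ⟪v, deriv α s⟫ + torsion α s * ⟪v, binormal α s⟫) := by
  simp only [altFrameC, real_inner_smul_right, inner_add_right]

theorem inner_tangent_altFrameC (hunit : ‖deriv α s‖ = 1) :
    ⟪deriv α s, altFrameC α s⟫ = -(curvature α s / altCurvatureF α s) := by
  rw [inner_altFrameC, inner_tangent_binormal, real_inner_self_eq_norm_sq, hunit]
  ring

theorem inner_deriv_tangent_altFrameC (hunit : ∀ᶠ t in 𝓝 s, ‖deriv α t‖ = 1) :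
    ⟪deriv (deriv α) s, altFrameC α s⟫ = 0 := by
  rw [inner_altFrameC, inner_deriv_tangent_binormal, real_inner_comm,
    inner_deriv_eq_zero_of_eventually_norm_eq hunit]
  ring

theorem altFrameC_ne_zero (hunit : ‖deriv α s‖ = 1) (hκ : curvature α s ≠ 0) :
    altFrameC α s ≠ 0 := by
  intro hC
  have hTC := inner_tangent_altFrameC hunit
  rw [hC, inner_zero_right, zero_eq_neg] at hTC
  exact div_ne_zero hκ (altCurvatureF_ne_zero hκ) hTC

theorem inner_tangent_deriv_altFrameC (hα : ContDiffAt ℝ 4 α s)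
    (hunit : ∀ᶠ t in 𝓝 s, ‖deriv α t‖ = 1) (hκ : curvature α s ≠ 0) :
    ⟪deriv α s, deriv (altFrameC α) s⟫ = altCurvatureG α s * torsion α s / altCurvatureF α s := by
  have hα₃ : ContDiffAt ℝ (1 + 3) α s := by convert hα using 1; norm_num
  have hα₂ : ContDiffAt ℝ (1 + 2) α s := hα.of_le (by norm_num)
  have hT : DifferentiableAt ℝ (deriv α) s :=
    (hα₂.derivWithin (m := 1) (by gcongr; exact one_le_two)).differentiableAt one_ne_zero
  have hC := (contDiffAt_altFrameC hα₃ hκ).differentiableAt one_ne_zero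
  have hTC : (fun t => ⟪deriv α t, altFrameC α t⟫) =ᶠ[𝓝 s]
      fun t => -(curvature α t / altCurvatureF α t) :=
    hunit.mono fun t ht => inner_tangent_altFrameC ht
  calc ⟪deriv α s, deriv (altFrameC α) s⟫
      = deriv (fun t => ⟪deriv α t, altFrameC α t⟫) s := by
        rw [deriv_inner_apply ℝ hT hC, inner_deriv_tangent_altFrameC hunit, add_zero]
    _ = -deriv (fun t => curvature α t / altCurvatureF α t) s := by
        rw [hTC.deriv_eq, deriv.fun_neg]
    _ = altCurvatureG α s * torsion α s / altCurvatureF α s := by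
        simp only [altCurvatureF]
        rw [deriv_div_sqrt_sq_add_sq ((contDiffAt_curvature hα₂ hκ).differentiableAt one_ne_zero)
          ((contDiffAt_torsion hα₃ hκ).differentiableAt one_ne_zero) hκ, neg_neg, altCurvatureG]

end UnitSpeedCurve

open UnitSpeedCurve

theorem stmt_7_general {α : ℝ → EuclideanSpace ℝ (Fin 3)} {s : ℝ} (hα : ContDiffAt ℝ 4 α s)
    (hunit : ∀ᶠ t in 𝓝 s, ‖deriv α t‖ = 1) (hκ : curvature α s ≠ 0) :
    strictionLine α (altFrameC α) s = α s ↔ altCurvatureG α s * torsion α s = 0 := by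
  rw [strictionLine_eq_iff (altFrameC_ne_zero hunit.self_of_nhds hκ),
    inner_tangent_deriv_altFrameC hα hunit hκ, div_eq_zero_iff,
    or_iff_left (altCurvatureF_ne_zero hκ)]

theorem stmt_7
    (α : ℝ → EuclideanSpace ℝ (Fin 3))
    (hα : ContDiff ℝ (⊤ : ℕ∞) α)
    (hunit : ∀ s, ‖deriv α s‖ = 1)
    (T : ℝ → EuclideanSpace ℝ (Fin 3)) (hT : ∀ s, T s = deriv α s)
    (κ : ℝ → ℝ) (hκ : ∀ s, κ s = ‖deriv (deriv α) s‖) (hκpos : ∀ s, 0 < κ s)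
    (N : ℝ → EuclideanSpace ℝ (Fin 3)) (hN : ∀ s, N s = (κ s)⁻¹ • deriv (deriv α) s)
    (B : ℝ → EuclideanSpace ℝ (Fin 3)) (hB : ∀ s, B s = cross3 (T s) (N s))
    (τ : ℝ → ℝ) (hτ : ∀ s, τ s = ⟪deriv N s, B s⟫)
    (f : ℝ → ℝ) (hf : ∀ s, f s = Real.sqrt (κ s ^ 2 + τ s ^ 2))
    (g : ℝ → ℝ) (hg : ∀ s, g s = κ s ^ 2 / (κ s ^ 2 + τ s ^ 2) * deriv (fun u => τ u / κ u) s)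
    (C : ℝ → EuclideanSpace ℝ (Fin 3))
    (hC : ∀ s, C s = (Real.sqrt (κ s ^ 2 + τ s ^ 2))⁻¹ • ((-κ s) • T s + τ s • B s))
    (W : ℝ → EuclideanSpace ℝ (Fin 3))
    (hW : ∀ s, W s = (Real.sqrt (κ s ^ 2 + τ s ^ 2))⁻¹ • (τ s • T s + κ s • B s)) :
    ((∀ s : ℝ, α s - (⟪T s, deriv C s⟫ / ‖deriv C s‖ ^ 2) • C s = α s) ↔
      (∀ s : ℝ, g s * τ s = 0)) ∧
    (((∀ s : ℝ, g s = 0) ∨ (∀ s : ℝ, τ s = 0)) →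
      ∀ s : ℝ, α s - (⟪T s, deriv C s⟫ / ‖deriv C s‖ ^ 2) • C s = α s) := by
  obtain rfl : T = deriv α := funext hT
  obtain rfl : κ = curvature α := funext hκ
  obtain rfl : N = principalNormal α := funext hN
  obtain rfl : B = binormal α := funext hB
  obtain rfl : τ = torsion α := funext hτ
  obtain rfl : g = altCurvatureG α := funext hg
  obtain rfl : C = altFrameC α := funext hC
  have strictionLine_eq_iff_mul_eq_zero (s : ℝ) :
      strictionLine α (altFrameC α) s = α s ↔ altCurvatureG α s * torsion α s = 0 :=
    stmt_7_general (contDiffAt_infty.1 hα.contDiffAt 4) (.of_forall hunit) (hκpos s).ne'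
  refine ⟨forall_congr' strictionLine_eq_iff_mul_eq_zero, ?_⟩
  rintro (hg₀ | hτ₀) s
  · exact (strictionLine_eq_iff_mul_eq_zero s).2 (by rw [hg₀, zero_mul])
  · exact (strictionLine_eq_iff_mul_eq_zero s).2 (by rw [hτ₀, mul_zero])
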